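/- arXiv:1501.05753 — 2 statements merged into one kernel-verified Lean document; each statement's English description precedes it below -/
import Mathlib

section
/- Let A be a unital C*-algebra, a ∈ A, and s ∈ ℝ. The map τ ↦ dim_τ(ker a) is continuous on the set Λ_{a,s} = { τ trace on A : τ(ln_+|a|) ≥ s }, equipped with the topology of pointwise convergence. -/
open scoped ComplexOrder ENNReal
open Filter Topology Matrix

set_option synthInstance.maxHeartbeats 1000000
set_option maxHeartbeats 1000000

noncomputable section

/-- A (finite positive) trace on a unital C*-algebra `A`: a positive linear functional
`τ : A → ℂ` satisfying `τ (x * y) = τ (y * x)`. -/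
def IsCStarTrace {A : Type*} [CStarAlgebra A] (τ : A → ℂ) : Prop :=
  (∀ x y : A, τ (x + y) = τ x + τ y) ∧ (∀ (c : ℂ) (x : A), τ (c • x) = c * τ x) ∧
  (∀ x : A, 0 ≤ τ (star x * x)) ∧ (∀ x y : A, τ (x * y) = τ (y * x))

/-- `|x| = (x* x)^{1/2}`, via the continuous functional calculus. -/
def cfcAbs {A : Type*} [CStarAlgebra A] (x : A) : A := cfc Real.sqrt (star x * x)

/-- The set of continuous majorants of `ln₊` on `[0,∞)`.  (Recall that `Real.log 0 = 0`,
so that `Real.log` agrees with `ln₊` on `[0,∞)`.) -/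
def lnPlusMajorants : Set (ℝ → ℝ) :=
  {g | ContinuousOn g (Set.Ici 0) ∧ ∀ t ∈ Set.Ici (0:ℝ), Real.log t ≤ g t}

/-- `τ(ln₊ |x|) := inf { τ(g(|x|)) : g : [0,∞) → ℝ continuous, g ≥ ln₊ } ∈ ℝ ∪ {−∞}`. -/
def traceLnPlus {A : Type*} [CStarAlgebra A] (τ : A → ℂ) (x : A) : EReal :=
  ⨅ g ∈ lnPlusMajorants, ((τ (cfc g (cfcAbs x))).re : EReal)

/-- `dim_τ(ker x) := inf { τ(h(|x|)) : h : [0,∞) → [0,1] continuous, h 0 = 1 }`. -/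
def traceKerDim {A : Type*} [CStarAlgebra A] (τ : A → ℂ) (x : A) : ℝ :=
  sInf {r : ℝ | ∃ h : ℝ → ℝ, ContinuousOn h (Set.Ici 0) ∧
    (∀ t ∈ Set.Ici (0:ℝ), h t ∈ Set.Icc (0:ℝ) 1) ∧ h 0 = 1 ∧ r = (τ (cfc h (cfcAbs x))).re}

/-!
Let `k` be a continuous cutoff which is `1` at `0` and vanishes on `[e⁻ᵐ, ∞)`. For every competitor
`h` in the infimum defining `dim_τ(ker a)`, the function `log⁺ - m (k - h)` is a continuous majorant
of `ln₊`: on `(0, e⁻ᵐ]` because `ln₊ ≤ -m` and `k - h ≤ 1` there, on `[e⁻ᵐ, ∞)` because `k - h ≤ 0`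
there, and at `0`, where `ln₊` jumps to `0`, because `k 0 = h 0`. Hence
`s ≤ τ(log⁺|a|) - m (τ(k(|a|)) - τ(h(|a|)))`, and taking the infimum over `h` gives
`0 ≤ τ(k(|a|)) - dim_τ(ker a) ≤ (τ(log⁺|a|) - s) / m`. As `τ(log⁺|a|)` is locally bounded in `τ`,
the continuous functions `τ ↦ τ(k(|a|))` approximate `τ ↦ dim_τ(ker a)` locally uniformly.
-/

open Real

/-- The functions over which the infimum defining `dim_τ(ker x)` is taken. Only their restriction
to `[0, ∞)` matters; they are functions on `ℝ` because `cfc` expects that. -/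
def kerCutoffs : Set (ℝ → ℝ) :=
  {h | ContinuousOn h (Set.Ici 0) ∧ (∀ t ∈ Set.Ici (0 : ℝ), h t ∈ Set.Icc (0 : ℝ) 1) ∧ h 0 = 1}

lemma exists_mem_kerCutoffs_forall_ge_eq_zero {δ : ℝ} (hδ : 0 < δ) :
    ∃ k ∈ kerCutoffs, ∀ t ≥ δ, k t = 0 := by
  refine ⟨fun t ↦ max 0 (1 - t / δ), ⟨by fun_prop, fun t ht ↦ ⟨le_max_left _ _, ?_⟩, by simp⟩,
    fun t ht ↦ max_eq_left ?_⟩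
  · exact max_le zero_le_one (sub_le_self _ (div_nonneg ht hδ.le))
  · exact sub_nonpos.2 ((one_le_div hδ).2 ht)

lemma posLog_sub_mul_sub_mem_lnPlusMajorants {k h : ℝ → ℝ} {m : ℝ} (hm : 0 ≤ m)
    (hk : k ∈ kerCutoffs) (hk_zero : ∀ t ≥ exp (-m), k t = 0) (hh : h ∈ kerCutoffs) :
    (fun t ↦ log⁺ t - m * (k t - h t)) ∈ lnPlusMajorants := by
  obtain ⟨hk_cont, hk_mem, hk_one⟩ := hk
  obtain ⟨hh_cont, hh_mem, hh_one⟩ := hh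
  refine ⟨continuous_posLog.continuousOn.sub
    (continuousOn_const.mul (hk_cont.sub hh_cont)), fun t ht ↦ ?_⟩
  rcases (Set.mem_Ici.1 ht).eq_or_lt with rfl | ht_pos
  · simp [hk_one, hh_one]
  rcases le_total t (exp (-m)) with ht_small | ht_large
  · have log_le : log t ≤ -m := (log_le_iff_le_exp ht_pos).2 ht_small
    have sub_le_one : k t - h t ≤ 1 := by linarith [(hk_mem t ht).2, (hh_mem t ht).1]
    linarith [mul_le_of_le_one_right hm sub_le_one, posLog_nonneg (x := t)]
  · have log_le_posLog : log t ≤ log⁺ t := le_max_right _ _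
    simp only [hk_zero t ht_large]
    linarith [mul_nonneg hm (hh_mem t ht).1]

section CStarAlgebra

variable {A : Type*} [CStarAlgebra A]

lemma traceKerDim_eq_sInf_image (τ : A → ℂ) (x : A) :
    traceKerDim τ x = sInf ((fun h ↦ (τ (cfc h (cfcAbs x))).re) '' kerCutoffs) := by
  simp only [traceKerDim, kerCutoffs, Set.image, Set.mem_ofPred_eq, and_assoc, eq_comm]

lemma spectrum_cfcAbs_subset_Ici (x : A) : spectrum ℝ (cfcAbs x) ⊆ Set.Ici 0 := by
  rw [cfcAbs, cfc_map_spectrum Real.sqrt (star x * x)]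
  rintro _ ⟨t, -, rfl⟩
  exact Real.sqrt_nonneg t

lemma re_apply_cfc_sub_mul_sub (φ : A →ₗ[ℂ] ℂ) {x : A} {f g h : ℝ → ℝ}
    (hf : ContinuousOn f (spectrum ℝ x)) (hg : ContinuousOn g (spectrum ℝ x))
    (hh : ContinuousOn h (spectrum ℝ x)) (c : ℝ) :
    (φ (cfc (fun t ↦ f t - c * (g t - h t)) x)).re =
      (φ (cfc f x)).re - c * ((φ (cfc g x)).re - (φ (cfc h x)).re) := by
  rw [cfc_sub f (fun t ↦ c * (g t - h t)) x, cfc_const_mul c (fun t ↦ g t - h t) x, cfc_sub g h x,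
    ← Complex.coe_smul]
  simp

lemma mul_sub_le_of_le_traceLnPlus (φ : A →ₗ[ℂ] ℂ) {a : A} {s m : ℝ} {k h : ℝ → ℝ}
    (hs : (s : EReal) ≤ traceLnPlus φ a) (hm : 0 ≤ m) (hk : k ∈ kerCutoffs)
    (hk_zero : ∀ t ≥ exp (-m), k t = 0) (hh : h ∈ kerCutoffs) :
    m * ((φ (cfc k (cfcAbs a))).re - (φ (cfc h (cfcAbs a))).re) ≤
      (φ (cfc log⁺ (cfcAbs a))).re - s := by
  have le_re : s ≤ (φ (cfc (fun t ↦ log⁺ t - m * (k t - h t)) (cfcAbs a))).re :=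
    EReal.coe_le_coe_iff.1 <|
      hs.trans (iInf₂_le _ (posLog_sub_mul_sub_mem_lnPlusMajorants hm hk hk_zero hh))
  have hspec := spectrum_cfcAbs_subset_Ici a
  rw [re_apply_cfc_sub_mul_sub φ continuous_posLog.continuousOn (hk.1.mono hspec)
    (hh.1.mono hspec)] at le_re
  linarith

lemma sub_div_le_traceKerDim (φ : A →ₗ[ℂ] ℂ) {a : A} {s m : ℝ} {k : ℝ → ℝ}
    (hs : (s : EReal) ≤ traceLnPlus φ a) (hm : 0 < m) (hk : k ∈ kerCutoffs)
    (hk_zero : ∀ t ≥ exp (-m), k t = 0) :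
    (φ (cfc k (cfcAbs a))).re - ((φ (cfc log⁺ (cfcAbs a))).re - s) / m ≤ traceKerDim φ a := by
  rw [traceKerDim_eq_sInf_image]
  refine le_csInf (Set.Nonempty.image _ ⟨k, hk⟩) ?_
  rintro _ ⟨h, hh, rfl⟩
  rw [sub_le_comm, le_div_iff₀' hm]
  exact mul_sub_le_of_le_traceLnPlus φ hs hm.le hk hk_zero hh

section Order

variable [PartialOrder A] [StarOrderedRing A]

lemma traceKerDim_le_re_apply_cfc (φ : A →ₚ[ℂ] ℂ) (a : A) {k : ℝ → ℝ} (hk : k ∈ kerCutoffs) :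
    traceKerDim φ a ≤ (φ (cfc k (cfcAbs a))).re := by
  rw [traceKerDim_eq_sInf_image]
  refine csInf_le ⟨0, ?_⟩ (Set.mem_image_of_mem _ hk)
  rintro _ ⟨h, hh, rfl⟩
  have cfc_h_nonneg : 0 ≤ cfc h (cfcAbs a) :=
    cfc_nonneg fun t ht ↦ (hh.2.1 t (spectrum_cfcAbs_subset_Ici a ht)).1
  exact (Complex.nonneg_iff.1 (map_nonneg φ cfc_h_nonneg)).1

lemma dist_traceKerDim_le (φ : A →ₚ[ℂ] ℂ) {a : A} {s m : ℝ} {k : ℝ → ℝ}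
    (hs : (s : EReal) ≤ traceLnPlus φ a) (hm : 0 < m) (hk : k ∈ kerCutoffs)
    (hk_zero : ∀ t ≥ exp (-m), k t = 0) :
    dist (traceKerDim φ a) (φ (cfc k (cfcAbs a))).re ≤
      ((φ (cfc log⁺ (cfcAbs a))).re - s) / m := by
  have upper := traceKerDim_le_re_apply_cfc φ a hk
  have lower := sub_div_le_traceKerDim φ.toLinearMap hs hm hk hk_zero
  rw [dist_comm, Real.dist_eq, abs_of_nonneg (sub_nonneg.2 upper)]
  exact sub_le_comm.1 lower

theorem stmt12_general (a : A) (s : ℝ) :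
    ContinuousOn (fun τ : A → ℂ ↦ traceKerDim τ a)
      {τ | (∃ φ : A →ₚ[ℂ] ℂ, ⇑φ = τ) ∧ (s : EReal) ≤ traceLnPlus τ a} := by
  refine continuousOn_of_locally_uniform_approx_of_continuousWithinAt fun τ₀ _ u hu ↦ ?_
  obtain ⟨ε, hε, hεu⟩ := Metric.mem_uniformity_dist.1 hu
  set C : ℝ := (τ₀ (cfc log⁺ (cfcAbs a))).re + 1
  obtain ⟨m, hm_pos, hm_lt⟩ : ∃ m : ℝ, 0 < m ∧ (C - s) / m < ε :=
    ((eventually_gt_atTop 0).and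
      ((tendsto_const_nhds.div_atTop tendsto_id).eventually_lt_const hε)).exists
  obtain ⟨k, hk, hk_zero⟩ := exists_mem_kerCutoffs_forall_ge_eq_zero (exp_pos (-m))
  have continuous_re_apply (x : A) : Continuous fun τ : A → ℂ ↦ (τ x).re := by fun_prop
  have posLog_lt : ∀ᶠ τ : A → ℂ in 𝓝 τ₀, (τ (cfc log⁺ (cfcAbs a))).re < C :=
    (continuous_re_apply _).continuousAt.eventually_lt_const (lt_add_one _)
  refine ⟨_, inter_mem_nhdsWithin _ posLog_lt, fun τ ↦ (τ (cfc k (cfcAbs a))).re,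
    (continuous_re_apply _).continuousWithinAt, ?_⟩
  rintro _ ⟨⟨⟨φ, rfl⟩, hs⟩, hφ : (φ (cfc log⁺ (cfcAbs a))).re < C⟩
  refine hεu ((dist_traceKerDim_le φ hs hm_pos hk hk_zero).trans_lt (lt_of_le_of_lt ?_ hm_lt))
  gcongr

lemma IsCStarTrace.exists_positiveLinearMap {τ : A → ℂ} (hτ : IsCStarTrace τ) :
    ∃ φ : A →ₚ[ℂ] ℂ, ⇑φ = τ := by
  obtain ⟨map_add, map_smul, map_star_mul_self_nonneg, -⟩ := hτ
  refine ⟨.mk₀ { toFun := τ, map_add' := map_add, map_smul' := map_smul } fun x hx ↦ ?_, rfl⟩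
  obtain ⟨y, rfl⟩ := CStarAlgebra.nonneg_iff_eq_star_mul_self.1 hx
  exact map_star_mul_self_nonneg y

end Order

end CStarAlgebra

/-- the map `τ ↦ dim_τ(ker a)` is continuous on
`Λ_{a,s} = {τ : τ(ln₊|a|) ≥ s}`, for the topology of pointwise convergence on traces. -/
theorem stmt12 {A : Type*} [CStarAlgebra A] (a : A) (s : ℝ) :
    ContinuousOn (fun τ : A → ℂ => traceKerDim τ a)
      {τ | IsCStarTrace τ ∧ (s : EReal) ≤ traceLnPlus τ a} := by
  let _ := CStarAlgebra.spectralOrder A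
  have := CStarAlgebra.spectralOrderedRing A
  exact (stmt12_general a s).mono fun τ hτ ↦ ⟨hτ.1.exists_positiveLinearMap, hτ.2⟩

end
end

section
/- Let a ∈ M_n(ℚ̄F_∞). For every sofic trace φ on F_∞ (i.e. every trace in the closure, for pointwise convergence on F_∞, of the set of permutational traces) and for any two field embeddings j₁, j₂ : ℚ̄ → ℂ, one has dim_φ(ker j₁(a)) = dim_φ(ker j₂(a)); that is, dim_φ(ker a) does not depend on the embedding ℚ̄ ⊂ ℂ. -/
open scoped ComplexOrder ENNReal
open Filter Topology Matrix

set_option synthInstance.maxHeartbeats 1000000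
set_option maxHeartbeats 1000000

noncomputable section

instance piLpCompleteSpace {ι : Type*} [Fintype ι] (p : ℝ≥0∞) (β : ι → Type*)
    [∀ i, UniformSpace (β i)] [∀ i, CompleteSpace (β i)] : CompleteSpace (PiLp p β) :=
  PiLp.completeSpace p β

/-- `φ : G → ℂ` is of positive type: for every finite family `g₁, …, g_m` of elements of
`G`, the matrix `(φ (gᵢ⁻¹ gⱼ))_{i,j}` is positive semidefinite. -/
def IsPosType {G : Type*} [Group G] (φ : G → ℂ) : Prop :=
  ∀ (m : ℕ) (g : Fin m → G), (Matrix.of fun i j => φ ((g i)⁻¹ * g j)).PosSemidef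

/-- A trace on a (discrete) group: a function of positive type, constant on conjugacy
classes. -/
def IsGroupTrace {G : Type*} [Group G] (φ : G → ℂ) : Prop :=
  IsPosType φ ∧ ∀ g h : G, φ (h * g * h⁻¹) = φ g

/-- GNS representation data for a function `φ` on a group `G`: a Hilbert space `H`, a
unital algebra morphism `π` from `ℂG = MonoidAlgebra ℂ G` to the bounded operators on `H`
sending group elements to unitaries (this is the condition `star_of`), and a cyclic vector
`ξ` whose matrix coefficient is (the linear extension of) `φ`. -/
structure GNSRep (G : Type*) [Group G] (φ : G → ℂ) where
  H : Type
  [instNormed : NormedAddCommGroup H]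
  [instInner : InnerProductSpace ℂ H]
  [instComplete : CompleteSpace H]
  π : MonoidAlgebra ℂ G →ₐ[ℂ] (H →L[ℂ] H)
  ξ : H
  star_of : ∀ g : G, star (π (MonoidAlgebra.of ℂ G g)) = π (MonoidAlgebra.of ℂ G g⁻¹)
  inner_eq : ∀ g : G, (inner ℂ ξ (π (MonoidAlgebra.of ℂ G g) ξ) : ℂ) = φ g
  cyclic : Dense (Set.range fun x : MonoidAlgebra ℂ G => π x ξ)

attribute [instance] GNSRep.instNormed GNSRep.instInner GNSRep.instComplete

/-- The vector `ξᵢ ∈ Hⁿ`: the cyclic vector `ξ` in the `i`-th summand, `0` elsewhere. -/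
def GNSRep.vec {G : Type*} [Group G] {φ : G → ℂ} (R : GNSRep G φ) {n : ℕ} (i : Fin n) :
    PiLp 2 (fun _ : Fin n => R.H) :=
  (PiLp.continuousLinearEquiv 2 ℂ (fun _ : Fin n => R.H)).symm (Pi.single i R.ξ)

/-- The action of a matrix `a ∈ Mₙ(R)` on the Hilbert space `H'ⁿ` (with its `ℓ²` inner
product) induced by a morphism `π : R → B(H')`: `(π_n(a) v)_i = Σ_j π(a i j) (v j)`. -/
def matAct {R H' : Type*} [Ring R] [Algebra ℂ R] [NormedAddCommGroup H']
    [InnerProductSpace ℂ H'] {n : ℕ}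
    (π : R →ₐ[ℂ] (H' →L[ℂ] H')) (a : Matrix (Fin n) (Fin n) R) :
    PiLp 2 (fun _ : Fin n => H') →L[ℂ] PiLp 2 (fun _ : Fin n => H') :=
  (PiLp.continuousLinearEquiv 2 ℂ _).symm.toContinuousLinearMap ∘L
    (ContinuousLinearMap.pi fun i => ∑ j, (π (a i j)).comp (ContinuousLinearMap.proj j)) ∘L
    (PiLp.continuousLinearEquiv 2 ℂ _).toContinuousLinearMap

/-- `(φ ⊗ Trₙ)(ln₊ |a|) := inf { Σᵢ ⟨ξᵢ, g(|π(a)|) ξᵢ⟩ : g : [0,∞) → ℝ continuous, g ≥ ln₊ }`,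
an element of `ℝ ∪ {−∞}`, computed in the GNS representation `R`. -/
def GNSRep.lnPlusQ {G : Type*} [Group G] {φ : G → ℂ} (R : GNSRep G φ) {n : ℕ}
    (a : Matrix (Fin n) (Fin n) (MonoidAlgebra ℂ G)) : EReal :=
  ⨅ g ∈ lnPlusMajorants,
    ((∑ i, (inner ℂ (R.vec i) (cfc g (cfcAbs (matAct R.π a)) (R.vec i)) : ℂ)).re : EReal)

/-- A function `φ` on `G` satisfies Lück's condition if `(φ ⊗ Trₙ)(ln₊|a|) ≥ 0` for every
`n ≥ 1` and every `a ∈ Mₙ(ℤG)` (an `a ∈ Mₙ(ℂG)` whose coefficients are all integers),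
where the quantity is computed in any GNS representation of `φ`. -/
def SatisfiesLueck {G : Type*} [Group G] (φ : G → ℂ) : Prop :=
  ∀ (n : ℕ), 0 < n → ∀ a : Matrix (Fin n) (Fin n) (MonoidAlgebra ℂ G),
    (∀ (i j : Fin n) (g : G), ∃ m : ℤ, (a i j).coeff g = (m : ℂ)) →
    ∀ R : GNSRep G φ, 0 ≤ R.lnPlusQ a

/-- `dim_φ(ker a) := inf { Σᵢ ⟨ξᵢ, h(|π(a)|) ξᵢ⟩ : h : [0,∞) → [0,1] continuous, h 0 = 1 }`,
the von Neumann dimension of the kernel of `a`, computed in the GNS representation `R`. -/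
def GNSRep.kerDim {G : Type*} [Group G] {φ : G → ℂ} (R : GNSRep G φ) {n : ℕ}
    (a : Matrix (Fin n) (Fin n) (MonoidAlgebra ℂ G)) : ℝ :=
  sInf {r : ℝ | ∃ h : ℝ → ℝ, ContinuousOn h (Set.Ici 0) ∧
    (∀ t ∈ Set.Ici (0:ℝ), h t ∈ Set.Icc (0:ℝ) 1) ∧ h 0 = 1 ∧
    r = (∑ i, (inner ℂ (R.vec i) (cfc h (cfcAbs (matAct R.π a)) (R.vec i)) : ℂ)).re}

/-- `τ_k(σ) = card {x | σ x = x} / k`, the fixed-point ratio of a permutation. -/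
def permFixRatio {k : ℕ} (σ : Equiv.Perm (Fin k)) : ℝ :=
  (Finset.univ.filter fun x => σ x = x).card / k

/-- `δ_k(σ₁, σ₂) = card {x | σ₁ x ≠ σ₂ x} / k`, the normalized Hamming distance. -/
def permHamming {k : ℕ} (σ₁ σ₂ : Equiv.Perm (Fin k)) : ℝ :=
  (Finset.univ.filter fun x => σ₁ x ≠ σ₂ x).card / k

/-- A permutational trace on `G`: a function of the form `g ↦ τ_k(π g)` for some `k ≥ 1`
and some group homomorphism `π : G → S_k`. -/
def IsPermutationalTrace {G : Type*} [Group G] (ψ : G → ℂ) : Prop :=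
  ∃ (k : ℕ) (_ : 0 < k) (π : G →* Equiv.Perm (Fin k)),
    ψ = fun g => (permFixRatio (π g) : ℂ)

/-- Apply a field embedding `j : ℚ̄ → ℂ` coefficientwise to a matrix over the group ring
`ℚ̄G`, where `ℚ̄ = AlgebraicClosure ℚ` is the field of algebraic numbers. -/
def mapCoeffs {n : ℕ} {G : Type*} [Group G] (j : AlgebraicClosure ℚ →+* ℂ)
    (a : Matrix (Fin n) (Fin n) (MonoidAlgebra (AlgebraicClosure ℚ) G)) :
    Matrix (Fin n) (Fin n) (MonoidAlgebra ℂ G) :=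
  fun i i' => MonoidAlgebra.ofCoeff (Finsupp.mapRange j j.map_zero (a i i').coeff)

/-!
Lück approximation. In a finite permutation representation `ρ`, a matrix `x` over the group ring
becomes a matrix `A`, and the moments of the normalized spectral distribution of `A* A` are values
of the trace of `ρ`. So if these traces converge to `φ`, the spectral distributions converge weakly
to that of `x* x` in the GNS representation of `φ`; this bounds the normalized nullities of `A`
asymptotically by `dim_φ (ker x)` from above, and only mass escaping to `0` can make them smaller.

After clearing denominators the coefficients of `x` are algebraic integers. The product of the
nonzero eigenvalues of `A* A` is then, up to sign, the trailing coefficient of its characteristic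
polynomial: a nonzero algebraic integer whose conjugates are bounded exponentially in the size of
`A`. Its norm being a nonzero integer, the product is at least `D ^ (-size)` with `D` independent
of `ρ`. Hence few nonzero eigenvalues are small, no mass escapes, and the normalized nullities
converge to `dim_φ (ker x)`. They are given by matrix ranks, which no field embedding changes.
-/

section MatrixRank

variable {E L s : Type*} [Field E] [Field L] [Fintype s]

lemma rank_fromBlocks_one_zero (E : Type*) [Field E] (p q : Type*) [Fintype p] [Fintype q]
    [DecidableEq p] :
    (fromBlocks 1 0 0 0 : Matrix (p ⊕ q) (p ⊕ q) E).rank = Fintype.card p := by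
  classical
  rw [← diagonal_one, ← diagonal_zero, fromBlocks_diagonal, rank_diagonal]
  refine (Fintype.card_congr (Equiv.ofBijective (fun i => ⟨Sum.inl i, by simp⟩) ⟨?_, ?_⟩)).symm
  · exact fun i j hij => Sum.inl_injective (congrArg Subtype.val hij)
  · rintro ⟨i | j, h⟩
    · exact ⟨i, rfl⟩
    · simp at h

lemma matrix_rank_map (f : E →+* L) (A : Matrix s s E) : (A.map f).rank = A.rank := by
  classical
  obtain ⟨V, U, e, hV, hU, hnormal⟩ := exists_rank_normal_form A
  have hVdet := (isUnit_iff_isUnit_det _).1 (hV.map f.mapMatrix)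
  have hUdet := (isUnit_iff_isUnit_det _).1 (hU.map f.mapMatrix)
  have hmap : f.mapMatrix V * A.map f * f.mapMatrix U = (fromBlocks 1 0 0 0).submatrix e e := by
    have := congrArg f.mapMatrix hnormal
    rw [map_mul, map_mul] at this
    simpa [fromBlocks_map, ← submatrix_map] using this
  rw [← rank_mul_eq_right_of_isUnit_det _ _ hVdet, ← rank_mul_eq_left_of_isUnit_det _ _ hUdet,
    hmap, rank_submatrix, rank_fromBlocks_one_zero, Fintype.card_fin]

end MatrixRank

section SpectralEstimates

open Polynomial

variable {s : Type*} [Fintype s] [DecidableEq s]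

lemma norm_le_of_isRoot_charpoly {A : Matrix s s ℂ} {C : ℝ} (hrow : ∀ i, ∑ j, ‖A i j‖ ≤ C) {z : ℂ}
    (hz : A.charpoly.IsRoot z) : ‖z‖ ≤ C := by
  let : NormedRing (Matrix s s ℂ) := Matrix.linftyOpNormedRing
  let : NormedAlgebra ℂ (Matrix s s ℂ) := Matrix.linftyOpNormedAlgebra
  rcases isEmpty_or_nonempty s with _ | ⟨⟨i₀⟩⟩
  · simp [charpoly] at hz
  have : Nonempty s := ⟨i₀⟩
  lift C to NNReal using (Finset.sum_nonneg fun _ _ => norm_nonneg _).trans (hrow i₀)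
  calc ‖z‖ ≤ ‖A‖ := spectrum.norm_le_norm_of_mem (mem_spectrum_of_isRoot_charpoly hz)
    _ ≤ C := by
      rw [linfty_opNorm_def, NNReal.coe_le_coe]
      exact Finset.sup_le fun i _ => by simpa [← NNReal.coe_le_coe] using hrow i

lemma norm_coeff_charpoly_le {A : Matrix s s ℂ} {C : ℝ} (hC : 1 ≤ C)
    (hrow : ∀ i, ∑ j, ‖A i j‖ ≤ C) (k : ℕ) : ‖A.charpoly.coeff k‖ ≤ (2 * C) ^ Fintype.card s := by
  have hroots : ∀ z ∈ (A.charpoly.map (RingHom.id ℂ)).roots, ‖z‖ ≤ C := fun z hz =>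
    norm_le_of_isRoot_charpoly hrow (isRoot_of_mem_roots (by rwa [Polynomial.map_id] at hz))
  have hcoeff := coeff_le_of_roots_le k A.charpoly_monic (IsAlgClosed.splits _) hroots
  rw [Polynomial.map_id, charpoly_natDegree_eq_dim] at hcoeff
  calc ‖A.charpoly.coeff k‖
      ≤ C ^ (Fintype.card s - k) * (Fintype.card s).choose k := hcoeff
    _ ≤ C ^ Fintype.card s * 2 ^ Fintype.card s := by
      gcongr
      · exact Nat.sub_le _ _
      · exact_mod_cast Nat.choose_le_two_pow _ _
    _ = (2 * C) ^ Fintype.card s := by rw [mul_pow, mul_comm]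

lemma trailingCoeff_map_of_injective {R S : Type*} [Semiring R] [Semiring S] {f : R →+* S}
    (hf : Function.Injective f) (p : R[X]) : (p.map f).trailingCoeff = f p.trailingCoeff := by
  rw [trailingCoeff, trailingCoeff, coeff_map]
  simp [natTrailingDegree, trailingDegree, support_map_of_injective p hf]

lemma trailingCoeff_prod {ι R : Type*} [CommRing R] [IsDomain R] (t : Finset ι) (p : ι → R[X]) :
    (∏ i ∈ t, p i).trailingCoeff = ∏ i ∈ t, (p i).trailingCoeff := by
  classical
  induction t using Finset.induction_on with
  | empty => simp [trailingCoeff]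
  | insert i t hi ih => rw [Finset.prod_insert hi, Finset.prod_insert hi, trailingCoeff_mul, ih]

lemma trailingCoeff_X_sub_C {R : Type*} [CommRing R] [DecidableEq R] [Nontrivial R] (r : R) :
    (X - C r).trailingCoeff = if r = 0 then 1 else -r := by
  split_ifs with hr
  · simp [hr, trailingCoeff]
  · rw [trailingCoeff_eq_coeff_zero] <;> simp [hr]

lemma norm_trailingCoeff_charpoly {A : Matrix s s ℂ} (hA : A.IsHermitian) :
    ‖A.charpoly.trailingCoeff‖ = ∏ i with hA.eigenvalues i ≠ 0, |hA.eigenvalues i| := by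
  rw [hA.charpoly_eq, trailingCoeff_prod, norm_prod, Finset.prod_filter]
  refine Finset.prod_congr rfl fun i _ => ?_
  rw [trailingCoeff_X_sub_C]
  by_cases hi : hA.eigenvalues i = 0 <;> simp [hi]

lemma abs_eigenvalues_le {A : Matrix s s ℂ} (hA : A.IsHermitian) {C : ℝ}
    (hrow : ∀ i, ∑ j, ‖A i j‖ ≤ C) (i : s) : |hA.eigenvalues i| ≤ C := by
  have hroot : A.charpoly.IsRoot (hA.eigenvalues i : ℂ) := by
    rw [hA.charpoly_eq, IsRoot, eval_prod]
    exact Finset.prod_eq_zero (Finset.mem_univ i) (by simp)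
  simpa using norm_le_of_isRoot_charpoly hrow hroot

lemma trace_aeval_eq_sum_eigenvalues {A : Matrix s s ℂ} (hA : A.IsHermitian) (p : ℝ[X]) :
    (aeval A p).trace = ∑ i, ((p.eval (hA.eigenvalues i) : ℝ) : ℂ) := by
  rw [← cfc_polynomial p A hA.isSelfAdjoint, hA.cfc_eq, IsHermitian.cfc,
    Unitary.conjStarAlgAut_apply, trace_mul_cycle]
  simp

end SpectralEstimates

section NumberField

open NumberField Polynomial

variable {K s : Type*} [Field K] [NumberField K] [Fintype s] [DecidableEq s]

lemma one_le_norm_mul_house_pow {α : K} (hint : IsIntegral ℤ α) (hα : α ≠ 0) (σ : K →+* ℂ) :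
    1 ≤ ‖σ α‖ * house α ^ (Module.finrank ℚ K - 1) := by
  obtain ⟨N, hN⟩ := IsIntegrallyClosed.isIntegral_iff.1 (Algebra.isIntegral_norm ℚ hint)
  have hN0 : N ≠ 0 := by
    rintro rfl
    exact hα (Algebra.norm_eq_zero_iff.1 (by rw [← hN, map_zero]))
  calc (1 : ℝ) ≤ |(N : ℝ)| := by exact_mod_cast Int.one_le_abs hN0
    _ = ‖Algebra.norm ℚ α‖ := by rw [← hN]; simp [Int.norm_eq_abs]
    _ ≤ _ := norm_norm_le_norm_mul_house_pow α σ

lemma house_le_of_forall_norm_le {α : K} {r : ℝ} (h : ∀ σ : K →+* ℂ, ‖σ α‖ ≤ r) : house α ≤ r := by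
  have hr : 0 ≤ r := (norm_nonneg _).trans (h (Classical.arbitrary _))
  exact (pi_norm_le_iff_of_nonneg hr).2 h

/-- The trailing coefficient of the characteristic polynomial is a nonzero algebraic integer all of
whose conjugates are at most `(2 * C) ^ card s`, while its norm is a nonzero rational integer. -/
lemma one_le_mul_norm_trailingCoeff_charpoly (A : Matrix s s (𝓞 K)) {C : ℝ} (hC : 1 ≤ C)
    (hrow : ∀ (σ : K →+* ℂ) i, ∑ j, ‖σ (A i j)‖ ≤ C) (σ : K →+* ℂ) :
    1 ≤ ((2 * C) ^ (Module.finrank ℚ K - 1)) ^ Fintype.card s *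
      ‖σ A.charpoly.trailingCoeff‖ := by
  set c := A.charpoly.trailingCoeff
  have hc : (c : K) ≠ 0 := by
    simpa [c] using A.charpoly_monic.ne_zero
  have hconj (τ : K →+* ℂ) : ‖τ c‖ ≤ (2 * C) ^ Fintype.card s := by
    let f : 𝓞 K →+* ℂ := τ.comp (algebraMap (𝓞 K) K)
    have hcoeff := norm_coeff_charpoly_le (A := A.map f) hC (hrow τ) A.charpoly.natTrailingDegree
    rwa [charpoly_map, coeff_map] at hcoeff
  calc 1 ≤ ‖σ c‖ * house (c : K) ^ (Module.finrank ℚ K - 1) :=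
        one_le_norm_mul_house_pow c.isIntegral_coe hc σ
    _ ≤ ‖σ c‖ * ((2 * C) ^ Fintype.card s) ^ (Module.finrank ℚ K - 1) := by
      gcongr
      · exact house_nonneg _
      · exact house_le_of_forall_norm_le hconj
    _ = _ := by rw [mul_comm, pow_right_comm]

end NumberField

section GroupRing

variable {G ι : Type*}

/-- The linear extension of `ψ : G → ℂ` to the group ring. -/
def traceExt (ψ : G → ℂ) : MonoidAlgebra ℂ G →ₗ[ℂ] ℂ :=
  Finsupp.linearCombination ℂ ψ ∘ₗ (MonoidAlgebra.coeffLinearEquiv ℂ).toLinearMap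

lemma traceExt_single (ψ : G → ℂ) (g : G) (c : ℂ) :
    traceExt ψ (MonoidAlgebra.single g c) = c * ψ g := by
  simp [traceExt]

lemma continuous_traceExt (y : MonoidAlgebra ℂ G) : Continuous fun ψ : G → ℂ => traceExt ψ y := by
  simp only [traceExt, LinearMap.comp_apply, Finsupp.linearCombination_apply, Finsupp.sum]
  fun_prop

variable [Group G]

/-- The involution `∑ c_g g ↦ ∑ c̄_g g⁻¹` of the group ring; it makes `xᴴ` the adjoint of a matrix
`x` over the group ring. -/
instance groupRingStarAddMonoid {R : Type*} [Semiring R] [StarRing R] :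
    StarAddMonoid (MonoidAlgebra R G) where
  star y := .ofCoeff ((y.coeff.mapRange star (star_zero R)).equivMapDomain (Equiv.inv G))
  star_involutive y := by ext g; simp
  star_add y z := by ext g; simp

lemma coeff_groupRing_star {R : Type*} [Semiring R] [StarRing R] (y : MonoidAlgebra R G) (g : G) :
    (star y).coeff g = star (y.coeff g⁻¹) := by
  simp [star]

lemma groupRing_star_single {R : Type*} [Semiring R] [StarRing R] (g : G) (r : R) :
    star (MonoidAlgebra.single g r) = MonoidAlgebra.single g⁻¹ (star r) := by
  simp [star, Finsupp.equivMapDomain_single]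

section Coefficients

variable {R S : Type*} [Ring R] [Ring S]

lemma exists_mapMatrix_mapRingHom_eq [Fintype ι] [DecidableEq ι] (f : R →+* S)
    {x : Matrix ι ι (MonoidAlgebra S G)} (hx : ∀ i j g, (x i j).coeff g ∈ Set.range f) :
    ∃ y, (MonoidAlgebra.mapRingHom G f).mapMatrix y = x := by
  have hrange (i j) : x i j ∈ Set.range (MonoidAlgebra.map (f : R →+ S)) := by
    rw [MonoidAlgebra.range_map]
    exact hx i j
  choose y hy using hrange
  exact ⟨y, Matrix.ext hy⟩

/-- Matrices over the group ring with algebraic integer coefficients. -/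
def HasIntegralCoeffs (x : Matrix ι ι (MonoidAlgebra S G)) : Prop :=
  ∀ i j g, IsIntegral ℤ ((x i j).coeff g)

end Coefficients

namespace HasIntegralCoeffs

variable {x y : Matrix ι ι (MonoidAlgebra ℂ G)}

lemma conjTranspose (hx : HasIntegralCoeffs x) : HasIntegralCoeffs xᴴ := fun i j g => by
  rw [conjTranspose_apply, coeff_groupRing_star]
  exact (hx j i g⁻¹).map (starRingEnd ℂ).toIntAlgHom

variable [Fintype ι]

lemma mul (hx : HasIntegralCoeffs x) (hy : HasIntegralCoeffs y) : HasIntegralCoeffs (x * y) := by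
  classical
  let f := algebraMap (integralClosure ℤ ℂ) ℂ
  obtain ⟨x', rfl⟩ := exists_mapMatrix_mapRingHom_eq f fun i j g => ⟨⟨_, hx i j g⟩, rfl⟩
  obtain ⟨y', rfl⟩ := exists_mapMatrix_mapRingHom_eq f fun i j g => ⟨⟨_, hy i j g⟩, rfl⟩
  intro i j g
  rw [← map_mul, RingHom.mapMatrix_apply, Matrix.map_apply, MonoidAlgebra.coeff_mapRingHom]
  exact Subtype.property _

lemma exists_numberField [DecidableEq ι] (hx : HasIntegralCoeffs x) :
    ∃ (K : IntermediateField ℚ ℂ) (_ : NumberField K)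
      (y : Matrix ι ι (MonoidAlgebra (NumberField.RingOfIntegers K) G)),
      (MonoidAlgebra.mapRingHom G (algebraMap (NumberField.RingOfIntegers K) ℂ)).mapMatrix y
        = x := by
  let coeffs : Set ℂ := ⋃ i, ⋃ j, Set.range (x i j).coeff
  let K := IntermediateField.adjoin ℚ coeffs
  have hfinite : coeffs.Finite :=
    Set.finite_iUnion fun i => Set.finite_iUnion fun j => (x i j).coeff.finite_range
  have hintegral : ∀ z ∈ coeffs, IsIntegral ℤ z := by
    simp only [coeffs, Set.mem_iUnion]
    rintro _ ⟨i, j, g, rfl⟩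
    exact hx i j g
  have := hfinite.to_subtype
  have : FiniteDimensional ℚ K :=
    IntermediateField.finiteDimensional_adjoin fun z hz => (hintegral z hz).tower_top
  have hK : NumberField K := ⟨⟩
  refine ⟨K, hK, exists_mapMatrix_mapRingHom_eq _ fun i j g => ?_⟩
  have hmem : (x i j).coeff g ∈ coeffs := Set.mem_iUnion₂.2 ⟨i, j, g, rfl⟩
  let c : K := ⟨_, IntermediateField.subset_adjoin ℚ _ hmem⟩
  exact ⟨⟨c, (isIntegral_algHom_iff (K.val.restrictScalars ℤ) K.val.injective).1 (hx i j g)⟩, rfl⟩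

end HasIntegralCoeffs

end GroupRing

section PermutationRepresentations

variable {G ι α : Type*} [Group G] [Fintype ι] [DecidableEq ι] [Fintype α] [DecidableEq α]

section Definitions

variable (R : Type*) [CommRing R]

/-- The action of the group ring by permutation matrices attached to an action `ρ` on `α`. -/
def permRep (ρ : G →* Equiv.Perm α) : MonoidAlgebra R G →ₐ[R] Matrix α α R :=
  MonoidAlgebra.lift R _ G (permMatrixHom.comp ρ)

/-- The action of matrices over the group ring by block matrices, each block being a linear
combination of permutation matrices. -/
def matrixPermRep (ρ : G →* Equiv.Perm α) :
    Matrix ι ι (MonoidAlgebra R G) →ₐ[R] Matrix (ι × α) (ι × α) R :=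
  (compAlgEquiv ι α R R).toAlgHom.comp (permRep R ρ).mapMatrix

end Definitions

lemma permRep_single (R : Type*) [CommRing R] (ρ : G →* Equiv.Perm α) (g : G) (r : R) :
    permRep R ρ (MonoidAlgebra.single g r) = r • (ρ g)⁻¹.permMatrix R := by
  simp [permRep]

lemma matrixPermRep_apply (R : Type*) [CommRing R] (ρ : G →* Equiv.Perm α)
    (x : Matrix ι ι (MonoidAlgebra R G)) (p q : ι × α) :
    matrixPermRep R ρ x p q = permRep R ρ (x p.1 q.1) p.2 q.2 := rfl

lemma permRep_mapRingHom {R S : Type*} [CommRing R] [CommRing S] (f : R →+* S)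
    (ρ : G →* Equiv.Perm α) (y : MonoidAlgebra R G) :
    permRep S ρ (MonoidAlgebra.mapRingHom G f y) = (permRep R ρ y).map f := by
  induction y using MonoidAlgebra.induction_linear with
  | zero => simp
  | add y z hy hz => simp [hy, hz, Matrix.map_add]
  | single g r =>
    ext a b
    simp [permRep_single, apply_ite f]

lemma matrixPermRep_mapMatrix {R S : Type*} [CommRing R] [CommRing S] (f : R →+* S)
    (ρ : G →* Equiv.Perm α) (x : Matrix ι ι (MonoidAlgebra R G)) :
    matrixPermRep S ρ ((MonoidAlgebra.mapRingHom G f).mapMatrix x) =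
      (matrixPermRep R ρ x).map f := by
  ext p q
  exact congrFun₂ (permRep_mapRingHom f ρ (x p.1 q.1)) p.2 q.2

lemma permRep_star (R : Type*) [CommRing R] [StarRing R] (ρ : G →* Equiv.Perm α)
    (y : MonoidAlgebra R G) : permRep R ρ (star y) = (permRep R ρ y)ᴴ := by
  induction y using MonoidAlgebra.induction_linear with
  | zero => simp
  | add y z hy hz => simp [hy, hz]
  | single g r => simp [groupRing_star_single, permRep_single]

lemma matrixPermRep_conjTranspose (R : Type*) [CommRing R] [StarRing R] (ρ : G →* Equiv.Perm α)
    (x : Matrix ι ι (MonoidAlgebra R G)) : matrixPermRep R ρ xᴴ = (matrixPermRep R ρ x)ᴴ := by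
  ext p q
  exact congrFun₂ (permRep_star R ρ (x q.1 p.1)) p.2 q.2

/-- The sum of the absolute values of all coefficients of a matrix over the complex group ring. -/
def coeffNorm (x : Matrix ι ι (MonoidAlgebra ℂ G)) : ℝ :=
  ∑ i, ∑ j, (x i j).coeff.sum fun _ c => ‖c‖

lemma sum_norm_permRep_le (ρ : G →* Equiv.Perm α) (y : MonoidAlgebra ℂ G) (a : α) :
    ∑ b, ‖permRep ℂ ρ y a b‖ ≤ y.coeff.sum fun _ c => ‖c‖ := by
  have hrow (g : G) : ∑ b, ‖(ρ g)⁻¹.permMatrix ℂ a b‖ = 1 := by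
    simp [Equiv.toPEquiv_apply, apply_ite norm]
  calc ∑ b, ‖permRep ℂ ρ y a b‖
      ≤ ∑ b, ∑ g ∈ y.coeff.support, ‖y.coeff g‖ * ‖(ρ g)⁻¹.permMatrix ℂ a b‖ := by
        gcongr with b
        rw [permRep, MonoidAlgebra.lift_apply, Finsupp.sum, Matrix.sum_apply]
        exact norm_sum_le_of_le _ fun g _ => (norm_mul _ _).le
    _ = y.coeff.sum fun _ c => ‖c‖ := by
      rw [Finset.sum_comm]
      simp only [← Finset.mul_sum, hrow, mul_one, Finsupp.sum]

lemma sum_norm_matrixPermRep_le (ρ : G →* Equiv.Perm α) (x : Matrix ι ι (MonoidAlgebra ℂ G))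
    (p : ι × α) : ∑ q, ‖matrixPermRep ℂ ρ x p q‖ ≤ coeffNorm x := by
  have hnonneg (i j) : 0 ≤ (x i j).coeff.sum fun _ c => ‖c‖ :=
    Finset.sum_nonneg fun _ _ => norm_nonneg _
  rw [Fintype.sum_prod_type]
  calc ∑ j, ∑ b, ‖permRep ℂ ρ (x p.1 j) p.2 b‖
      ≤ ∑ j, (x p.1 j).coeff.sum fun _ c => ‖c‖ := by
        gcongr with j
        exact sum_norm_permRep_le ρ _ _
    _ ≤ coeffNorm x := Finset.single_le_sum
        (f := fun i => ∑ j, (x i j).coeff.sum fun _ c => ‖c‖)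
        (fun i _ => Finset.sum_nonneg fun j _ => hnonneg i j) (Finset.mem_univ p.1)

lemma HasIntegralCoeffs.exists_one_le_mul_norm_trailingCoeff_charpoly
    {x : Matrix ι ι (MonoidAlgebra ℂ G)} (hx : HasIntegralCoeffs x) :
    ∃ D : ℝ, 1 ≤ D ∧ ∀ (k : ℕ) (ρ : G →* Equiv.Perm (Fin k)),
      1 ≤ D ^ Fintype.card (ι × Fin k) * ‖(matrixPermRep ℂ ρ x).charpoly.trailingCoeff‖ := by
  obtain ⟨K, _, y, rfl⟩ := hx.exists_numberField
  let conj (σ : K →+* ℂ) : Matrix ι ι (MonoidAlgebra ℂ G) :=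
    (MonoidAlgebra.mapRingHom G (σ.comp (algebraMap _ _))).mapMatrix y
  obtain ⟨C, hC⟩ := Finite.bddAbove_range fun σ => coeffNorm (conj σ)
  refine ⟨(2 * max 1 C) ^ (Module.finrank ℚ K - 1), one_le_pow₀ ?_, fun k ρ => ?_⟩
  · linarith [le_max_left 1 C]
  have hrow (σ : K →+* ℂ) (p) :
      ∑ q, ‖σ (matrixPermRep (NumberField.RingOfIntegers K) ρ y p q)‖ ≤ max 1 C := by
    have := sum_norm_matrixPermRep_le ρ (conj σ) p
    rw [matrixPermRep_mapMatrix] at this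
    exact this.trans ((hC ⟨σ, rfl⟩).trans (le_max_right _ _))
  have htrailing := trailingCoeff_map_of_injective
    (FaithfulSMul.algebraMap_injective (NumberField.RingOfIntegers K) ℂ)
    (matrixPermRep _ ρ y).charpoly
  rw [matrixPermRep_mapMatrix, charpoly_map, htrailing]
  exact one_le_mul_norm_trailingCoeff_charpoly _ (le_max_left 1 C) hrow (algebraMap K ℂ)

end PermutationRepresentations

/-- A homomorphism from `G` to the symmetric group on `degree ≥ 1` points. -/
structure FinitePermRep (G : Type*) [Group G] where
  degree : ℕ
  degree_pos : 0 < degree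
  hom : G →* Equiv.Perm (Fin degree)

namespace FinitePermRep

variable {G ι : Type*} [Group G] [Fintype ι] [DecidableEq ι] (ρ : FinitePermRep G)

/-- The permutational trace of `ρ`. -/
def trace (g : G) : ℂ := permFixRatio (ρ.hom g)

/-- The eigenvalues of `A* A`, where `A` is the block matrix by which `x` acts through `ρ`. -/
def eigenvalues (x : Matrix ι ι (MonoidAlgebra ℂ G)) : ι × Fin ρ.degree → ℝ :=
  (isHermitian_conjTranspose_mul_self (matrixPermRep ℂ ρ.hom x)).eigenvalues

/-- The integral of `f` against the spectral distribution of `x* x` in the representation `ρ`. -/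
def spectralMean (x : Matrix ι ι (MonoidAlgebra ℂ G)) (f : ℝ → ℝ) : ℝ :=
  (∑ s, f (ρ.eigenvalues x s)) / ρ.degree

/-- The dimension of the kernel of `x` in the representation `ρ`, divided by the degree of `ρ`. -/
def kerDim {F : Type*} [Field F] (x : Matrix ι ι (MonoidAlgebra F G)) : ℝ :=
  Fintype.card ι - (matrixPermRep F ρ.hom x).rank / ρ.degree

lemma degree_cast_pos : (0 : ℝ) < ρ.degree := Nat.cast_pos.2 ρ.degree_pos

lemma kerDim_mapMatrix {E F : Type*} [Field E] [Field F] (f : E →+* F)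
    (x : Matrix ι ι (MonoidAlgebra E G)) :
    ρ.kerDim ((MonoidAlgebra.mapRingHom G f).mapMatrix x) = ρ.kerDim x := by
  rw [kerDim, matrixPermRep_mapMatrix, matrix_rank_map, kerDim]

lemma trace_permRep (y : MonoidAlgebra ℂ G) :
    (permRep ℂ ρ.hom y).trace = ρ.degree * traceExt ρ.trace y := by
  have hdeg : (ρ.degree : ℂ) ≠ 0 := Nat.cast_ne_zero.2 ρ.degree_pos.ne'
  induction y using MonoidAlgebra.induction_linear with
  | zero => simp
  | add y z hy hz => simp [hy, hz, mul_add]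
  | single g c =>
    have hfixed : ((ρ.hom g)⁻¹.permMatrix ℂ).trace = ρ.degree * ρ.trace g := by
      rw [← transpose_permMatrix, trace_transpose]
      simp [Matrix.trace, Equiv.toPEquiv_apply, trace, permFixRatio, mul_div_cancel₀ _ hdeg]
    rw [permRep_single, trace_smul, hfixed, traceExt_single, smul_eq_mul, mul_left_comm]

lemma trace_matrixPermRep (x : Matrix ι ι (MonoidAlgebra ℂ G)) :
    (matrixPermRep ℂ ρ.hom x).trace = ρ.degree * traceExt ρ.trace x.trace := by
  simp only [Matrix.trace, diag_apply, map_sum, Finset.mul_sum, Fintype.sum_prod_type,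
    matrixPermRep_apply]
  exact Finset.sum_congr rfl fun i _ => ρ.trace_permRep (x i i)

lemma spectralMean_eval (x : Matrix ι ι (MonoidAlgebra ℂ G)) (p : Polynomial ℝ) :
    (ρ.spectralMean x p.eval : ℂ) = traceExt ρ.trace (Polynomial.aeval (xᴴ * x) p).trace := by
  have hdeg : (ρ.degree : ℂ) ≠ 0 := Nat.cast_ne_zero.2 ρ.degree_pos.ne'
  have hmap : matrixPermRep ℂ ρ.hom (Polynomial.aeval (xᴴ * x) p) =
      Polynomial.aeval ((matrixPermRep ℂ ρ.hom x)ᴴ * matrixPermRep ℂ ρ.hom x) p := by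
    rw [← matrixPermRep_conjTranspose, ← map_mul]
    exact (Polynomial.aeval_algHom_apply ((matrixPermRep ℂ ρ.hom).restrictScalars ℝ) _ p).symm
  rw [← mul_right_inj' hdeg, ← ρ.trace_matrixPermRep, hmap,
    trace_aeval_eq_sum_eigenvalues (isHermitian_conjTranspose_mul_self _), spectralMean]
  push_cast
  exact mul_div_cancel₀ _ hdeg

lemma eigenvalues_mem_Icc (x : Matrix ι ι (MonoidAlgebra ℂ G)) (s : ι × Fin ρ.degree) :
    ρ.eigenvalues x s ∈ Set.Icc 0 (coeffNorm (xᴴ * x)) := by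
  refine ⟨eigenvalues_conjTranspose_mul_self_nonneg _ s, (le_abs_self _).trans ?_⟩
  refine abs_eigenvalues_le _ (fun p => ?_) s
  rw [← matrixPermRep_conjTranspose, ← map_mul]
  exact sum_norm_matrixPermRep_le ρ.hom _ p

lemma abs_spectralMean_sub_le (x : Matrix ι ι (MonoidAlgebra ℂ G)) {f g : ℝ → ℝ} {δ : ℝ}
    (hfg : ∀ t ∈ Set.Icc 0 (coeffNorm (xᴴ * x)), |f t - g t| ≤ δ) :
    |ρ.spectralMean x f - ρ.spectralMean x g| ≤ Fintype.card ι * δ := by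
  rw [spectralMean, spectralMean, ← sub_div, ← Finset.sum_sub_distrib, abs_div, Nat.abs_cast,
    div_le_iff₀ ρ.degree_cast_pos]
  calc |∑ s, (f (ρ.eigenvalues x s) - g (ρ.eigenvalues x s))|
      ≤ ∑ _s : ι × Fin ρ.degree, δ := Finset.abs_sum_le_sum_abs _ _ |>.trans <|
        Finset.sum_le_sum fun s _ => hfg _ (ρ.eigenvalues_mem_Icc x s)
    _ = Fintype.card ι * δ * ρ.degree := by simp; ring

lemma card_eigenvalues_eq_zero (x : Matrix ι ι (MonoidAlgebra ℂ G)) :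
    (Finset.card {s | ρ.eigenvalues x s = 0} : ℝ) = ρ.kerDim x * ρ.degree := by
  have hrank := (isHermitian_conjTranspose_mul_self
    (matrixPermRep ℂ ρ.hom x)).rank_eq_card_non_zero_eigs
  rw [rank_conjTranspose_mul_self, Fintype.card_subtype] at hrank
  have hcard := Finset.card_filter_add_card_filter_not (s := Finset.univ)
    (fun s => ρ.eigenvalues x s = 0)
  rw [Finset.card_univ, Fintype.card_prod, Fintype.card_fin] at hcard
  rw [kerDim, sub_mul, div_mul_cancel₀ _ ρ.degree_cast_pos.ne', eq_sub_iff_add_eq, hrank]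
  exact_mod_cast hcard

end FinitePermRep

lemma HasIntegralCoeffs.exists_one_le_mul_prod_eigenvalues
    {G ι : Type*} [Group G] [Fintype ι] [DecidableEq ι] {x : Matrix ι ι (MonoidAlgebra ℂ G)}
    (hx : HasIntegralCoeffs x) :
    ∃ D : ℝ, 1 ≤ D ∧ ∀ ρ : FinitePermRep G, 1 ≤ D ^ Fintype.card (ι × Fin ρ.degree) *
      ∏ s with ρ.eigenvalues x s ≠ 0, ρ.eigenvalues x s := by
  obtain ⟨D, hD, hbound⟩ :=
    (hx.conjTranspose.mul hx).exists_one_le_mul_norm_trailingCoeff_charpoly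
  refine ⟨D, hD, fun ρ => ?_⟩
  have hprod := norm_trailingCoeff_charpoly
    (isHermitian_conjTranspose_mul_self (matrixPermRep ℂ ρ.hom x))
  have := hbound ρ.degree ρ.hom
  rw [map_mul, matrixPermRep_conjTranspose, hprod] at this
  exact this.trans_eq (congrArg _ (Finset.prod_congr rfl fun s _ =>
    abs_of_nonneg (ρ.eigenvalues_mem_Icc x s).1))

section KernelCutoffs

/-- The functions `[0, ∞) → [0, 1]` that are continuous and take the value `1` at `0`. -/
def kernelCutoffs : Set (ℝ → ℝ) :=
  {h | ContinuousOn h (Set.Ici 0) ∧ (∀ t ∈ Set.Ici (0 : ℝ), h t ∈ Set.Icc (0 : ℝ) 1) ∧ h 0 = 1}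

lemma comp_mem_kernelCutoffs {h u : ℝ → ℝ} (hh : h ∈ kernelCutoffs)
    (hu : ContinuousOn u (Set.Ici 0)) (hmaps : Set.MapsTo u (Set.Ici 0) (Set.Ici 0))
    (hzero : u 0 = 0) : (fun t => h (u t)) ∈ kernelCutoffs :=
  ⟨hh.1.comp hu hmaps, fun _ ht => hh.2.1 _ (hmaps ht), by simpa [hzero] using hh.2.2⟩

/-- The piecewise linear cutoff function supported on `[0, ε]`. -/
def tent (ε t : ℝ) : ℝ := max 0 (1 - t / ε)

variable {ε : ℝ}

lemma tent_mem_kernelCutoffs (hε : 0 < ε) : tent ε ∈ kernelCutoffs := by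
  refine ⟨?_, fun t (ht : 0 ≤ t) => ⟨le_max_left _ _, ?_⟩, by simp [tent]⟩
  · unfold tent
    fun_prop
  · exact max_le zero_le_one (sub_le_self _ (by positivity))

lemma tent_eq_zero (hε : 0 < ε) {t : ℝ} (ht : ε ≤ t) : tent ε t = 0 :=
  max_eq_left (sub_nonpos.2 ((one_le_div hε).2 ht))

lemma card_small_mul_le {s : Type*} [Fintype s] {l : s → ℝ} {C D : ℝ} (hC : 1 ≤ C) (hD : 1 ≤ D)
    (hl : ∀ i, l i ∈ Set.Icc 0 C) (hprod : 1 ≤ D ^ Fintype.card s * ∏ i with l i ≠ 0, l i) (L : ℝ) :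
    Finset.card {i | l i ≠ 0 ∧ l i < Real.exp (-L)} * L ≤
      Fintype.card s * (Real.log D + Real.log C) := by
  have hpos : ∀ i ∈ ({i | l i ≠ 0} : Finset s), 0 < l i := fun i hi =>
    (hl i).1.lt_of_ne' (Finset.mem_filter.1 hi).2
  have hlogprod : 0 ≤ Fintype.card s * Real.log D + ∑ i with l i ≠ 0, Real.log (l i) := by
    have := Real.log_nonneg hprod
    rwa [Real.log_mul (by positivity) (Finset.prod_pos hpos).ne', Real.log_pow,
      Real.log_prod fun i hi => (hpos i hi).ne'] at this
  have hlog : ∀ i ∈ ({i | l i ≠ 0} : Finset s),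
      Real.log (l i) ≤ Real.log C - if l i < Real.exp (-L) then L else 0 := fun i hi => by
    have hupper := Real.log_le_log (hpos i hi) (hl i).2
    split_ifs with hsmall
    · have := (Real.log_lt_iff_lt_exp (hpos i hi)).2 hsmall
      linarith [Real.log_nonneg hC]
    · linarith
  have hsum := Finset.sum_le_sum hlog
  rw [Finset.sum_sub_distrib, Finset.sum_const, ← Finset.sum_filter, Finset.sum_const,
    Finset.filter_filter, nsmul_eq_mul, nsmul_eq_mul] at hsum
  have hcard : (Finset.card {i | l i ≠ 0} : ℝ) * Real.log C ≤ Fintype.card s * Real.log C := by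
    gcongr
    · exact Real.log_nonneg hC
    · exact Finset.card_le_univ _
  linarith

end KernelCutoffs

namespace FinitePermRep

variable {G ι : Type*} [Group G] [Fintype ι] [DecidableEq ι] (ρ : FinitePermRep G)

lemma kerDim_le_spectralMean (x : Matrix ι ι (MonoidAlgebra ℂ G)) {h : ℝ → ℝ}
    (hh : h ∈ kernelCutoffs) : ρ.kerDim x ≤ ρ.spectralMean x h := by
  rw [spectralMean, le_div_iff₀ ρ.degree_cast_pos, ← card_eigenvalues_eq_zero,
    Finset.natCast_card_filter]
  gcongr with s
  split_ifs with hs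
  · rw [hs, hh.2.2]
  · exact (hh.2.1 _ (ρ.eigenvalues_mem_Icc x s).1).1

lemma spectralMean_tent_le (x : Matrix ι ι (MonoidAlgebra ℂ G)) {ε : ℝ} (hε : 0 < ε) :
    ρ.spectralMean x (tent ε) ≤ ρ.kerDim x +
      Finset.card {s | ρ.eigenvalues x s ≠ 0 ∧ ρ.eigenvalues x s < ε} / ρ.degree := by
  have htent := tent_mem_kernelCutoffs hε
  rw [spectralMean, div_le_iff₀ ρ.degree_cast_pos, add_mul,
    div_mul_cancel₀ _ ρ.degree_cast_pos.ne', ← card_eigenvalues_eq_zero,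
    Finset.natCast_card_filter, Finset.natCast_card_filter, ← Finset.sum_add_distrib]
  gcongr with s
  have hle := (htent.2.1 _ (ρ.eigenvalues_mem_Icc x s).1).2
  by_cases hzero : ρ.eigenvalues x s = 0
  · simpa [hzero] using htent.2.2.le
  by_cases hsmall : ρ.eigenvalues x s < ε
  · simpa [hzero, hsmall] using hle
  · simp [hzero, hsmall, tent_eq_zero hε (not_lt.1 hsmall)]

end FinitePermRep

/-- A nonzero eigenvalue below `exp (-L)` costs the product of the nonzero eigenvalues a factor
`exp (-L)`, while that product is bounded below by `D ^ (-card)`. -/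
lemma HasIntegralCoeffs.exists_spectralMean_tent_le {G ι : Type*} [Group G] [Fintype ι]
    [DecidableEq ι] {x : Matrix ι ι (MonoidAlgebra ℂ G)} (hx : HasIntegralCoeffs x) :
    ∃ B : ℝ, ∀ L > 0, ∀ ρ : FinitePermRep G,
      ρ.spectralMean x (tent (Real.exp (-L))) ≤ ρ.kerDim x + B / L := by
  obtain ⟨D, hD, hprod⟩ := hx.exists_one_le_mul_prod_eigenvalues
  let C := max 1 (coeffNorm (xᴴ * x))
  refine ⟨Fintype.card ι * (Real.log D + Real.log C), fun L hL ρ => ?_⟩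
  refine (ρ.spectralMean_tent_le x (Real.exp_pos _)).trans (add_le_add_right ?_ _)
  rw [div_le_div_iff₀ ρ.degree_cast_pos hL]
  have hcount := card_small_mul_le (le_max_left 1 _) hD
    (fun s => Set.Icc_subset_Icc_right (le_max_right 1 _) (ρ.eigenvalues_mem_Icc x s)) (hprod ρ) L
  rw [Fintype.card_prod, Fintype.card_fin, Nat.cast_mul] at hcount
  linarith

section MatrixAction

variable {R H : Type*} [Ring R] [Algebra ℂ R] [NormedAddCommGroup H] [InnerProductSpace ℂ H]
  {n : ℕ} (π : R →ₐ[ℂ] (H →L[ℂ] H))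

lemma matAct_apply (a : Matrix (Fin n) (Fin n) R) (v : PiLp 2 fun _ : Fin n => H) (i : Fin n) :
    matAct π a v i = ∑ j, π (a i j) (v j) := by
  simp [matAct]

/-- `matAct` as an algebra homomorphism. -/
def matActHom : Matrix (Fin n) (Fin n) R →ₐ[ℂ]
    ((PiLp 2 fun _ : Fin n => H) →L[ℂ] (PiLp 2 fun _ : Fin n => H)) :=
  AlgHom.ofLinearMap
    { toFun := matAct π
      map_add' a b := by ext v i; simp [matAct_apply, Finset.sum_add_distrib]
      map_smul' c a := by ext v i; simp [matAct_apply, Finset.smul_sum] }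
    (by
      ext v i
      simp only [LinearMap.coe_mk, AddHom.coe_mk, matAct_apply]
      rw [Fintype.sum_eq_single i fun j hj => by simp [Matrix.one_apply_ne' hj]]
      simp)
    (fun a b => by
      ext v i
      simp only [LinearMap.coe_mk, AddHom.coe_mk, mul_apply_eq_comp, matAct_apply,
        Matrix.mul_apply, map_sum, map_mul, _root_.sum_apply]
      exact Finset.sum_comm)

lemma matActHom_apply (a : Matrix (Fin n) (Fin n) R) : matActHom π a = matAct π a := rfl

end MatrixAction

section AbsoluteValue

variable {A : Type*} [CStarAlgebra A]

lemma cfc_cfcAbs (T : A) {h : ℝ → ℝ} (hh : ContinuousOn h (Set.Ici 0)) :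
    cfc h (cfcAbs T) = cfc (fun t => h √t) (star T * T) := by
  rw [cfcAbs, ← cfc_comp' h Real.sqrt (star T * T) (hg := hh.mono ?_)]
  rintro _ ⟨t, _, rfl⟩
  exact Real.sqrt_nonneg t

lemma spectrum_star_mul_self_subset (T : A) :
    spectrum ℝ (star T * T) ⊆ Set.Icc 0 ‖star T * T‖ := fun t ht => by
  rcases subsingleton_or_nontrivial A with _ | _
  · simp [spectrum.of_subsingleton] at ht
  have hnonneg : 0 ≤ t := spectrum_star_mul_self_nonneg t ht
  exact ⟨hnonneg, by simpa [abs_of_nonneg hnonneg] using spectrum.norm_le_norm_of_mem ht⟩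

end AbsoluteValue

namespace GNSRep

variable {G : Type*} [Group G] {φ : G → ℂ} (R : GNSRep G φ) {n : ℕ}

lemma π_star (y : MonoidAlgebra ℂ G) : R.π (star y) = star (R.π y) := by
  induction y using MonoidAlgebra.induction_linear with
  | zero => simp
  | add y z hy hz => rw [star_add, map_add, map_add, hy, hz, star_add]
  | single g c =>
    have hsingle (g : G) (c : ℂ) : MonoidAlgebra.single g c = c • MonoidAlgebra.of ℂ G g := by simp
    rw [groupRing_star_single, hsingle, hsingle, map_smul, map_smul, star_smul, R.star_of]

lemma matAct_conjTranspose (x : Matrix (Fin n) (Fin n) (MonoidAlgebra ℂ G)) :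
    matAct R.π xᴴ = star (matAct R.π x) := by
  rw [ContinuousLinearMap.star_eq_adjoint, ContinuousLinearMap.eq_adjoint_iff]
  intro v w
  simp only [PiLp.inner_apply, matAct_apply, sum_inner, inner_sum, conjTranspose_apply, π_star,
    ContinuousLinearMap.star_eq_adjoint, ContinuousLinearMap.adjoint_inner_left]
  exact Finset.sum_comm

lemma inner_π (y : MonoidAlgebra ℂ G) : inner ℂ R.ξ (R.π y R.ξ) = traceExt φ y := by
  induction y using MonoidAlgebra.induction_linear with
  | zero => simp
  | add y z hy hz => simp [hy, hz]
  | single g c =>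
    have hsingle : MonoidAlgebra.single g c = c • MonoidAlgebra.of ℂ G g := by simp
    rw [traceExt_single, hsingle, map_smul, _root_.smul_apply, inner_smul_right, R.inner_eq]

lemma vec_apply (i j : Fin n) : R.vec i j = if j = i then R.ξ else 0 := by
  simp [vec]

lemma inner_vec (y : Matrix (Fin n) (Fin n) (MonoidAlgebra ℂ G)) (i : Fin n) :
    inner ℂ (R.vec i) (matAct R.π y (R.vec i)) = traceExt φ (y i i) := by
  rw [PiLp.inner_apply, Fintype.sum_eq_single i fun j hj => by simp [vec_apply, hj]]
  simp [matAct_apply, vec_apply, apply_ite, inner_π]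

lemma norm_vec (i : Fin n) : ‖R.vec i‖ = ‖R.ξ‖ := by
  simp [PiLp.norm_eq_of_L2, vec_apply, apply_ite]

/-- The integral of `f` against the spectral distribution `∑ ⟨ξᵢ, E_{x* x} ξᵢ⟩` of `x* x`; in
contrast with `kerDim` the functional calculus is applied to `x* x` and not to `|x|`, which makes
the values at polynomials algebraic expressions in `φ`. -/
def spectralTrace (x : Matrix (Fin n) (Fin n) (MonoidAlgebra ℂ G)) (f : ℝ → ℝ) : ℝ :=
  (∑ i, inner ℂ (R.vec i) (cfc f (star (matAct R.π x) * matAct R.π x) (R.vec i)) : ℂ).re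

variable (x : Matrix (Fin n) (Fin n) (MonoidAlgebra ℂ G))

lemma spectralTrace_nonneg {f : ℝ → ℝ} (hf : ∀ t ∈ Set.Ici (0 : ℝ), 0 ≤ f t) :
    0 ≤ R.spectralTrace x f := by
  have hpos : 0 ≤ cfc f (star (matAct R.π x) * matAct R.π x) :=
    cfc_nonneg fun t ht => hf t (spectrum_star_mul_self_subset _ ht).1
  rw [ContinuousLinearMap.nonneg_iff_isPositive] at hpos
  rw [spectralTrace, Complex.re_sum]
  exact Finset.sum_nonneg fun i _ => hpos.re_inner_nonneg_right _

lemma spectralTrace_congr {f g : ℝ → ℝ} (hfg : Set.EqOn f g (Set.Ici 0)) :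
    R.spectralTrace x f = R.spectralTrace x g := by
  rw [spectralTrace, spectralTrace,
    cfc_congr (hfg.mono fun t ht => (spectrum_star_mul_self_subset _ ht).1)]

lemma spectralTrace_eval (p : Polynomial ℝ) :
    R.spectralTrace x p.eval = (traceExt φ (Polynomial.aeval (xᴴ * x) p).trace).re := by
  have hmap : matAct R.π (Polynomial.aeval (xᴴ * x) p) =
      cfc p.eval (star (matAct R.π x) * matAct R.π x) := by
    rw [cfc_polynomial p _ (IsSelfAdjoint.star_mul_self _), ← matAct_conjTranspose]
    simp only [← matActHom_apply, ← map_mul]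
    exact (Polynomial.aeval_algHom_apply ((matActHom R.π).restrictScalars ℝ) _ p).symm
  simp only [spectralTrace, ← hmap, inner_vec, Matrix.trace, diag_apply, map_sum]

lemma abs_spectralTrace_sub_le {f g : ℝ → ℝ} (hf : ContinuousOn f (Set.Ici 0))
    (hg : ContinuousOn g (Set.Ici 0)) {δ : ℝ} (hδ : 0 ≤ δ)
    (hfg : ∀ t ∈ Set.Icc 0 ‖star (matAct R.π x) * matAct R.π x‖, |f t - g t| ≤ δ) :
    |R.spectralTrace x f - R.spectralTrace x g| ≤ n * ‖R.ξ‖ ^ 2 * δ := by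
  set b := star (matAct R.π x) * matAct R.π x with hb
  have hspec : spectrum ℝ b ⊆ Set.Icc 0 ‖b‖ := spectrum_star_mul_self_subset _
  have hnorm : ‖cfc f b - cfc g b‖ ≤ δ := by
    rw [← cfc_sub f g b (hf.mono fun t ht => (hspec ht).1) (hg.mono fun t ht => (hspec ht).1)]
    exact norm_cfc_le hδ fun t ht => hfg t (hspec ht)
  have hterm (i : Fin n) :
      ‖(inner ℂ (R.vec i) ((cfc f b - cfc g b) (R.vec i)) : ℂ)‖ ≤ ‖R.ξ‖ ^ 2 * δ :=
    calc _ ≤ ‖R.vec i‖ * (δ * ‖R.vec i‖) := (norm_inner_le_norm _ _).trans <| by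
          gcongr
          exact ContinuousLinearMap.le_of_opNorm_le _ hnorm _
      _ = _ := by rw [norm_vec]; ring
  rw [spectralTrace, spectralTrace, ← Complex.sub_re, ← Finset.sum_sub_distrib]
  simp only [← hb, ← inner_sub_right, ← _root_.sub_apply]
  calc _ ≤ _ := Complex.abs_re_le_norm _
    _ ≤ ∑ _i : Fin n, ‖R.ξ‖ ^ 2 * δ := norm_sum_le_of_le _ fun i _ => hterm i
    _ = _ := by simp [mul_assoc]

lemma isGLB_kerDim : IsGLB (R.spectralTrace x '' kernelCutoffs) (R.kerDim x) := by
  have hset : {r : ℝ | ∃ h : ℝ → ℝ, ContinuousOn h (Set.Ici 0) ∧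
      (∀ t ∈ Set.Ici (0:ℝ), h t ∈ Set.Icc (0:ℝ) 1) ∧ h 0 = 1 ∧
      r = (∑ i, (inner ℂ (R.vec i) (cfc h (cfcAbs (matAct R.π x)) (R.vec i)) : ℂ)).re} =
      R.spectralTrace x '' kernelCutoffs := by
    ext r
    constructor
    · rintro ⟨h, hcont, hmem, hzero, rfl⟩
      refine ⟨fun t => h √t, comp_mem_kernelCutoffs ⟨hcont, hmem, hzero⟩
        Real.continuous_sqrt.continuousOn (fun t _ => Real.sqrt_nonneg t) Real.sqrt_zero, ?_⟩
      rw [spectralTrace, cfc_cfcAbs _ hcont]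
    · rintro ⟨f, hf, rfl⟩
      obtain ⟨hcont, hmem, hzero⟩ : (fun t => f (t ^ 2)) ∈ kernelCutoffs :=
        comp_mem_kernelCutoffs hf (by fun_prop) (fun t _ => sq_nonneg t) (by simp)
      refine ⟨_, hcont, hmem, hzero, ?_⟩
      rw [cfc_cfcAbs _ hcont]
      exact R.spectralTrace_congr x fun t ht => by simp [Real.sq_sqrt ht]
  rw [kerDim, hset]
  refine isGLB_csInf ⟨_, tent 1, tent_mem_kernelCutoffs one_pos, rfl⟩ ⟨0, ?_⟩
  rintro _ ⟨f, hf, rfl⟩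
  exact R.spectralTrace_nonneg x fun t ht => (hf.2.1 t ht).1

lemma spectralTrace_smul (c : ℂ) {f : ℝ → ℝ} (hf : ContinuousOn f (Set.Ici 0)) :
    R.spectralTrace (c • x) f = R.spectralTrace x fun t => f (‖c‖ ^ 2 * t) := by
  set b := star (matAct R.π x) * matAct R.π x with hb
  have hsmul : star (matAct R.π (c • x)) * matAct R.π (c • x) = (‖c‖ ^ 2 : ℝ) • b := by
    rw [← matActHom_apply, map_smul, star_smul, smul_mul_smul_comm, matActHom_apply, ← hb,
      RCLike.star_def, Complex.conj_mul', ← Complex.ofReal_pow]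
    rfl
  have hcont : ContinuousOn f ((‖c‖ ^ 2 * ·) '' spectrum ℝ b) := hf.mono <| by
    rintro _ ⟨t, ht, rfl⟩
    exact mul_nonneg (sq_nonneg _) (spectrum_star_mul_self_subset _ ht).1
  rw [spectralTrace, spectralTrace, hsmul, ← hb, cfc_comp_const_mul (‖c‖ ^ 2) f b hcont]

lemma kerDim_le_kerDim_smul (c : ℂ) : R.kerDim x ≤ R.kerDim (c • x) := by
  refine (R.isGLB_kerDim (c • x)).2 ?_
  rintro _ ⟨f, hf, rfl⟩
  refine (R.isGLB_kerDim x).1 ⟨fun t => f (‖c‖ ^ 2 * t), comp_mem_kernelCutoffs hf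
    (by fun_prop) (fun t (ht : 0 ≤ t) => mul_nonneg (sq_nonneg _) ht) (mul_zero _), ?_⟩
  exact (R.spectralTrace_smul x c hf.1).symm

lemma kerDim_smul {c : ℂ} (hc : c ≠ 0) : R.kerDim (c • x) = R.kerDim x := by
  refine le_antisymm ?_ (R.kerDim_le_kerDim_smul x c)
  simpa [hc] using R.kerDim_le_kerDim_smul (c • x) c⁻¹

end GNSRep

section Approximation

variable {G : Type*} [Group G] {φ : G → ℂ} {n : ℕ}

/-- The filter of finite permutation representations whose trace tends pointwise to `φ`. -/
def approximations (φ : G → ℂ) : Filter (FinitePermRep G) :=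
  comap FinitePermRep.trace (𝓝 φ)

lemma approximations_neBot (hφ : φ ∈ closure {ψ | IsPermutationalTrace ψ}) :
    (approximations φ).NeBot := by
  rw [approximations, comap_neBot_iff_frequently]
  refine (mem_closure_iff_frequently.1 hφ).mono ?_
  rintro _ ⟨k, hk, ρ, rfl⟩
  exact ⟨⟨k, hk, ρ⟩, rfl⟩

variable (R : GNSRep G φ) (x : Matrix (Fin n) (Fin n) (MonoidAlgebra ℂ G))

lemma tendsto_spectralMean_eval (p : Polynomial ℝ) :
    Tendsto (fun ρ => ρ.spectralMean x p.eval) (approximations φ)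
      (𝓝 (R.spectralTrace x p.eval)) := by
  have hcont : Continuous fun ψ : G → ℂ =>
      (traceExt ψ (Polynomial.aeval (xᴴ * x) p).trace).re :=
    Complex.continuous_re.comp (continuous_traceExt _)
  rw [R.spectralTrace_eval x p]
  refine ((hcont.tendsto φ).comp tendsto_comap).congr fun ρ => ?_
  rw [Function.comp_apply, ← ρ.spectralMean_eval, Complex.ofReal_re]

lemma tendsto_spectralMean {f : ℝ → ℝ} (hf : ContinuousOn f (Set.Ici 0)) :
    Tendsto (fun ρ => ρ.spectralMean x f) (approximations φ) (𝓝 (R.spectralTrace x f)) := by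
  rw [Metric.tendsto_nhds]
  intro η hη
  let M := max (coeffNorm (xᴴ * x)) ‖star (matAct R.π x) * matAct R.π x‖
  let Q : ℝ := n + 1 + n * ‖R.ξ‖ ^ 2
  have hQ : 0 < Q := by positivity
  obtain ⟨p, hp⟩ := exists_polynomial_near_of_continuousOn 0 M f
    (hf.mono Set.Icc_subset_Ici_self) (η / Q) (by positivity)
  have htrace := R.abs_spectralTrace_sub_le x p.continuous.continuousOn hf (by positivity)
    fun t ht => (hp t (Set.Icc_subset_Icc_right (le_max_right _ _) ht)).le
  filter_upwards [Metric.tendsto_nhds.1 (tendsto_spectralMean_eval R x p) (η / Q) (by positivity)]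
    with ρ hρ
  have hmean := ρ.abs_spectralMean_sub_le x (f := f) (g := p.eval) fun t ht => by
    rw [abs_sub_comm]
    exact (hp t (Set.Icc_subset_Icc_right (le_max_left _ _) ht)).le
  rw [Fintype.card_fin] at hmean
  calc dist (ρ.spectralMean x f) (R.spectralTrace x f)
      ≤ dist (ρ.spectralMean x f) (ρ.spectralMean x p.eval) +
          dist (ρ.spectralMean x p.eval) (R.spectralTrace x p.eval) +
          dist (R.spectralTrace x p.eval) (R.spectralTrace x f) := dist_triangle4 _ _ _ _
    _ < n * (η / Q) + η / Q + n * ‖R.ξ‖ ^ 2 * (η / Q) :=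
      add_lt_add_of_lt_of_le (add_lt_add_of_le_of_lt hmean hρ) htrace
    _ = Q * (η / Q) := by ring
    _ = η := mul_div_cancel₀ η hQ.ne'

lemma tendsto_kerDim {x : Matrix (Fin n) (Fin n) (MonoidAlgebra ℂ G)} (hx : HasIntegralCoeffs x) :
    Tendsto (fun ρ => ρ.kerDim x) (approximations φ) (𝓝 (R.kerDim x)) := by
  refine tendsto_order.2 ⟨fun a ha => ?_, fun a ha => ?_⟩
  · obtain ⟨B, hB⟩ := hx.exists_spectralMean_tent_le
    obtain ⟨L, hL, hsmall⟩ : ∃ L > 0, a + B / L < R.kerDim x := by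
      have hlim : Tendsto (fun L => a + B / L) atTop (𝓝 a) := by
        simpa using (tendsto_const_nhds (x := B)).div_atTop tendsto_id |>.const_add a
      exact ((eventually_gt_atTop 0).and (hlim.eventually_lt_const ha)).exists
    have htent := tent_mem_kernelCutoffs (Real.exp_pos (-L))
    have hlower : R.kerDim x ≤ R.spectralTrace x (tent (Real.exp (-L))) :=
      (R.isGLB_kerDim x).1 ⟨_, htent, rfl⟩
    filter_upwards [(tendsto_spectralMean R x htent.1).eventually_const_lt (hsmall.trans_le hlower)]
      with ρ hρ
    linarith [hB L hL ρ]
  · obtain ⟨_, ⟨h, hh, rfl⟩, hlt⟩ := (isGLB_lt_iff (R.isGLB_kerDim x)).1 ha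
    filter_upwards [(tendsto_spectralMean R x hh.1).eventually_lt_const hlt] with ρ hρ
    exact (ρ.kerDim_le_spectralMean x hh).trans_lt hρ

end Approximation

section Embeddings

variable {G : Type*} [Group G] {n : ℕ}

lemma mapCoeffs_eq_mapMatrix (j : AlgebraicClosure ℚ →+* ℂ)
    (a : Matrix (Fin n) (Fin n) (MonoidAlgebra (AlgebraicClosure ℚ) G)) :
    mapCoeffs j a = (MonoidAlgebra.mapRingHom G j).mapMatrix a := rfl

lemma mapCoeffs_zsmul (j : AlgebraicClosure ℚ →+* ℂ) (m : ℤ)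
    (a : Matrix (Fin n) (Fin n) (MonoidAlgebra (AlgebraicClosure ℚ) G)) :
    mapCoeffs j (m • a) = (m : ℂ) • mapCoeffs j a := by
  rw [mapCoeffs_eq_mapMatrix, map_zsmul, Int.cast_smul_eq_zsmul, mapCoeffs_eq_mapMatrix]

lemma HasIntegralCoeffs.mapCoeffs
    {a : Matrix (Fin n) (Fin n) (MonoidAlgebra (AlgebraicClosure ℚ) G)}
    (ha : HasIntegralCoeffs a) (j : AlgebraicClosure ℚ →+* ℂ) :
    HasIntegralCoeffs (mapCoeffs j a) := fun i k g => (ha i k g).map j.toIntAlgHom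

lemma exists_hasIntegralCoeffs_zsmul {ι : Type*} [Finite ι]
    (a : Matrix ι ι (MonoidAlgebra (AlgebraicClosure ℚ) G)) :
    ∃ m : ℤ, m ≠ 0 ∧ HasIntegralCoeffs (m • a) := by
  let coeffs : Set (AlgebraicClosure ℚ) := ⋃ i, ⋃ j, Set.range (a i j).coeff
  have hfinite : coeffs.Finite :=
    Set.finite_iUnion fun i => Set.finite_iUnion fun j => (a i j).coeff.finite_range
  have : Algebra.IsAlgebraic ℤ (AlgebraicClosure ℚ) :=
    (IsFractionRing.comap_isAlgebraic_iff (K := ℚ)).2 (AlgebraicClosure.isAlgebraic ℚ)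
  obtain ⟨m, hm, hmem⟩ := Algebra.IsAlgebraic.exists_integral_multiples ℤ hfinite.toFinset
  refine ⟨m, hm, fun i j g => ?_⟩
  rw [Matrix.smul_apply, MonoidAlgebra.coeff_smul, Finsupp.smul_apply]
  exact hmem _ (hfinite.mem_toFinset.2 (Set.mem_iUnion₂.2 ⟨i, j, g, rfl⟩))

theorem stmt17_general {φ : G → ℂ} (hφ : φ ∈ closure {ψ | IsPermutationalTrace ψ})
    (R : GNSRep G φ) (a : Matrix (Fin n) (Fin n) (MonoidAlgebra (AlgebraicClosure ℚ) G))
    (j₁ j₂ : AlgebraicClosure ℚ →+* ℂ) :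
    R.kerDim (mapCoeffs j₁ a) = R.kerDim (mapCoeffs j₂ a) := by
  have := approximations_neBot hφ
  obtain ⟨m, hm, hint⟩ := exists_hasIntegralCoeffs_zsmul a
  have hlim (j : AlgebraicClosure ℚ →+* ℂ) :
      Tendsto (fun ρ => ρ.kerDim (m • a)) (approximations φ) (𝓝 (R.kerDim (mapCoeffs j a))) := by
    rw [← R.kerDim_smul (mapCoeffs j a) (Int.cast_ne_zero.2 hm), ← mapCoeffs_zsmul]
    refine (tendsto_kerDim R (hint.mapCoeffs j)).congr fun ρ => ?_
    rw [mapCoeffs_eq_mapMatrix, ρ.kerDim_mapMatrix]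
  exact tendsto_nhds_unique (hlim j₁) (hlim j₂)

end Embeddings

/-- for `a ∈ Mₙ(ℚ̄ F_∞)` and any sofic trace `φ` on `F_∞` (a trace in the
pointwise closure of the permutational traces), `dim_φ(ker j(a))` does not depend on the
field embedding `j : ℚ̄ → ℂ`. -/
theorem stmt17 (n : ℕ) (hn : 0 < n)
    (a : Matrix (Fin n) (Fin n) (MonoidAlgebra (AlgebraicClosure ℚ) (FreeGroup ℕ)))
    (φ : FreeGroup ℕ → ℂ)
    (hφ : φ ∈ closure {ψ : FreeGroup ℕ → ℂ | IsPermutationalTrace ψ})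
    (j₁ j₂ : AlgebraicClosure ℚ →+* ℂ) :
    ∀ R : GNSRep (FreeGroup ℕ) φ, R.kerDim (mapCoeffs j₁ a) = R.kerDim (mapCoeffs j₂ a) :=
  fun R => stmt17_general hφ R a j₁ j₂

end
end
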